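/- Assume k₂ ≠ 0 and |k₁| > 1. Then for any sequences (ε_m) in (0,1] with ε_m → 0 and (φ_m) of 2π-periodic solutions of the system (S_{ε_m}), the sequence (φ_m(0)) does not converge to any point of the set ξ(ℝ×ℝ) = { (sin θ, cos θ, sin η, cos η) : θ, η ∈ ℝ }. -/

import Mathlib

open scoped Topology

/-- The saturation function: `φ(x) = -1` for `x < -1`, `φ(x) = x` for `-1 ≤ x ≤ 1`,
`φ(x) = 1` for `x > 1`. -/
noncomputable def sat (x : ℝ) : ℝ := if x < -1 then -1 else if x ≤ 1 then x else 1

/-- The right-hand side of the four-dimensional system (S_ε). -/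
noncomputable def sysF (k₁ k₂ ε t : ℝ) (x : Fin 4 → ℝ) : Fin 4 → ℝ :=
  ![x 1 - x 0 * (x 0 ^ 2 + x 1 ^ 2 - 1),
    -x 0 - x 1 * (x 0 ^ 2 + x 1 ^ 2 - 1) + ε * (Real.sin t + sat (k₁ * x 2)),
    x 3 - x 2 * (x 2 ^ 2 + x 3 ^ 2 - 1),
    -x 2 - x 3 * (x 2 ^ 2 + x 3 ^ 2 - 1) + ε * sat (k₂ * x 1)]

/-- The family of initial conditions of `2π`-periodic solutions of the unperturbed
system: `ξ(θ,η) = (sin θ, cos θ, sin η, cos η)`. -/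
noncomputable def xiPt (θ η : ℝ) : Fin 4 → ℝ :=
  ![Real.sin θ, Real.cos θ, Real.sin η, Real.cos η]

open Real Filter

section Saturation

lemma sat_eq_max_min (x : ℝ) : sat x = max (-1) (min x 1) := by
  unfold sat
  split_ifs with h₁ h₂
  · rw [min_eq_left (by linarith), max_eq_left h₁.le]
  · rw [min_eq_left h₂, max_eq_right (by linarith)]
  · rw [min_eq_right (by linarith), max_eq_right (by norm_num)]

lemma continuous_sat : Continuous sat := by
  have h : sat = fun x => max (-1) (min x 1) := funext sat_eq_max_min
  rw [h]
  fun_prop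

lemma abs_sat_le_one (x : ℝ) : |sat x| ≤ 1 := by
  unfold sat
  split_ifs <;> rw [abs_le] <;> constructor <;> linarith

lemma sat_neg (x : ℝ) : sat (-x) = -sat x := by
  unfold sat
  split_ifs <;> linarith

lemma sat_mul_self_pos {x : ℝ} (hx : x ≠ 0) : 0 < sat x * x := by
  unfold sat
  split_ifs
  · linarith
  · exact mul_self_pos.mpr hx
  · linarith

lemma sq_le_sat_mul {k s : ℝ} (hk : 1 < k) (hs : |s| ≤ 1) : s ^ 2 ≤ sat (k * s) * s := by
  obtain ⟨h₁, h₂⟩ := abs_le.mp hs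
  unfold sat
  split_ifs with h h'
  · have : s < 0 := by by_contra! h0; nlinarith
    nlinarith
  · nlinarith [sq_nonneg s]
  · have : 0 < s := by by_contra! h0; nlinarith
    nlinarith

end Saturation

section FourierCoefficients

lemma integral_comp_add_period {f : ℝ → ℝ} (hf : Function.Periodic f (2 * π)) (θ : ℝ) :
    ∫ t in (0 : ℝ)..2 * π, f (t + θ) = ∫ t in (0 : ℝ)..2 * π, f t := by
  rw [intervalIntegral.integral_comp_add_right]
  have := hf.intervalIntegral_add_eq θ 0
  rw [zero_add] at this ⊢
  rw [← this, add_comm]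

lemma integral_comp_cos_mul_sin {f : ℝ → ℝ} (hf : Continuous f) :
    ∫ t in (0 : ℝ)..2 * π, f (cos t) * sin t = 0 := by
  have h := intervalIntegral.integral_comp_mul_deriv (a := 0) (b := 2 * π) (f := cos)
    (f' := fun t => -sin t) (g := f) (fun t _ => hasDerivAt_cos t)
    (by fun_prop) hf
  simp only [Function.comp, cos_zero, cos_two_pi, intervalIntegral.integral_same, mul_neg,
    intervalIntegral.integral_neg, neg_eq_zero] at h
  exact h

lemma integral_sat_mul_cos_mul_cos_ne_zero {k : ℝ} (hk : k ≠ 0) :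
    ∫ t in (0 : ℝ)..2 * π, sat (k * cos t) * cos t ≠ 0 := by
  have hpos : 0 < ∫ t in (0 : ℝ)..2 * π, k * (sat (k * cos t) * cos t) := by
    have key (t : ℝ) : k * (sat (k * cos t) * cos t) = sat (k * cos t) * (k * cos t) := by ring
    have hc := continuous_sat
    refine intervalIntegral.integral_pos (by positivity) (by fun_prop) (fun t _ => ?_)
      ⟨0, ⟨le_rfl, by positivity⟩, ?_⟩
    · rw [key]
      rcases eq_or_ne (k * cos t) 0 with h | h
      · simp [h]
      · exact (sat_mul_self_pos h).le
    · rw [key]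
      exact sat_mul_self_pos (by simpa using hk)
  rw [intervalIntegral.integral_const_mul] at hpos
  exact right_ne_zero_of_mul (ne_of_gt hpos)

/-- The first sine coefficient of `sat (k * sin t)` exceeds that of `sin t`. -/
lemma pi_lt_integral_sat_mul_sin {k : ℝ} (hk : 1 < k) :
    π < ∫ t in (0 : ℝ)..2 * π, sat (k * sin t) * sin t := by
  have hc := continuous_sat
  have hpos : 0 < ∫ t in (0 : ℝ)..2 * π, (sat (k * sin t) * sin t - sin t ^ 2) := by
    refine intervalIntegral.integral_pos (by positivity) (by fun_prop)
      (fun t _ => sub_nonneg.mpr (sq_le_sat_mul hk (abs_sin_le_one t)))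
      ⟨π / 6, ⟨by positivity, by linarith [pi_pos]⟩, ?_⟩
    rw [sin_pi_div_six]
    unfold sat
    split_ifs <;> linarith
  rw [intervalIntegral.integral_sub (by apply Continuous.intervalIntegrable; fun_prop)
    (by apply Continuous.intervalIntegrable; fun_prop), integral_sin_sq] at hpos
  simp at hpos
  linarith

lemma pi_lt_abs_integral_sat_mul_sin {k : ℝ} (hk : 1 < |k|) :
    π < |∫ t in (0 : ℝ)..2 * π, sat (k * sin t) * sin t| := by
  rcases lt_abs.mp hk with h | h
  · exact (pi_lt_integral_sat_mul_sin h).trans_le (le_abs_self _)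
  · have := pi_lt_integral_sat_mul_sin h
    simp only [neg_mul, sat_neg, intervalIntegral.integral_neg] at this
    exact this.trans_le (neg_le_abs _)

lemma integral_sin_mul_sin_add (θ : ℝ) :
    ∫ t in (0 : ℝ)..2 * π, sin t * sin (t + θ) = π * cos θ := by
  have h (t : ℝ) : sin t * sin (t + θ) = cos θ * sin t ^ 2 + sin θ * (sin t * cos t) := by
    rw [sin_add]; ring
  simp_rw [h]
  rw [intervalIntegral.integral_add (by apply Continuous.intervalIntegrable; fun_prop)
    (by apply Continuous.intervalIntegrable; fun_prop), intervalIntegral.integral_const_mul,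
    intervalIntegral.integral_const_mul, integral_sin_sq, integral_sin_mul_cos₁]
  simp
  ring

lemma integral_sat_cos_mul_sin (k θ η : ℝ) :
    ∫ t in (0 : ℝ)..2 * π, sat (k * cos (t + θ)) * sin (t + η) =
      sin (η - θ) * ∫ t in (0 : ℝ)..2 * π, sat (k * cos t) * cos t := by
  have hc := continuous_sat
  have h (t : ℝ) : sat (k * cos (t + θ)) * sin (t + η) =
      (fun s => sin (η - θ) * (sat (k * cos s) * cos s) +
        cos (η - θ) * (sat (k * cos s) * sin s)) (t + θ) := by
    rw [show t + η = (t + θ) + (η - θ) by ring, sin_add]; ring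
  simp_rw [h]
  rw [integral_comp_add_period (f := fun s => sin (η - θ) * (sat (k * cos s) * cos s) +
        cos (η - θ) * (sat (k * cos s) * sin s)) (fun s => by simp),
    intervalIntegral.integral_add (by apply Continuous.intervalIntegrable; fun_prop)
    (by apply Continuous.intervalIntegrable; fun_prop), intervalIntegral.integral_const_mul,
    intervalIntegral.integral_const_mul,
    integral_comp_cos_mul_sin (f := fun x => sat (k * x)) (by fun_prop)]
  ring

lemma integral_sat_sin_mul_sin {θ η : ℝ} (h0 : sin (η - θ) = 0) (k : ℝ) :
    ∫ t in (0 : ℝ)..2 * π, sat (k * sin (t + η)) * sin (t + θ) =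
      cos (η - θ) * ∫ t in (0 : ℝ)..2 * π, sat (k * sin t) * sin t := by
  have h (t : ℝ) : sat (k * sin (t + η)) * sin (t + θ) =
      (fun s => cos (η - θ) * (sat (k * sin s) * sin s)) (t + η) := by
    rw [show t + θ = (t + η) - (η - θ) by ring, sin_sub, h0]; ring
  simp_rw [h]
  rw [integral_comp_add_period (f := fun s => cos (η - θ) * (sat (k * sin s) * sin s))
    (fun s => by simp), intervalIntegral.integral_const_mul]

end FourierCoefficients

section Oscillator

/-- `(x, y)` is a `2π`-periodic solution of the planar oscillator with forcing `ε * g`, where `g` is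
continuous and bounded by `2`. -/
structure IsForcedOscillation (ε : ℝ) (g x y : ℝ → ℝ) : Prop where
  continuous_forcing : Continuous g
  abs_forcing_le : ∀ t, |g t| ≤ 2
  hasDerivAt_fst : ∀ t, HasDerivAt x (y t - x t * (x t ^ 2 + y t ^ 2 - 1)) t
  hasDerivAt_snd : ∀ t, HasDerivAt y (-x t - y t * (x t ^ 2 + y t ^ 2 - 1) + ε * g t) t
  periodic_fst : Function.Periodic x (2 * π)
  periodic_snd : Function.Periodic y (2 * π)

/-- The component of `(x, y)` along the unit vector `(sin (t + θ), cos (t + θ))`. -/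
noncomputable def radialPart (θ : ℝ) (x y : ℝ → ℝ) (t : ℝ) : ℝ :=
  x t * sin (t + θ) + y t * cos (t + θ)

/-- The component of `(x, y)` along the unit vector `(cos (t + θ), -sin (t + θ))`. -/
noncomputable def tangentialPart (θ : ℝ) (x y : ℝ → ℝ) (t : ℝ) : ℝ :=
  x t * cos (t + θ) - y t * sin (t + θ)

lemma fst_eq_parts (θ : ℝ) (x y : ℝ → ℝ) (t : ℝ) :
    x t = radialPart θ x y t * sin (t + θ) + tangentialPart θ x y t * cos (t + θ) := by
  unfold radialPart tangentialPart
  linear_combination (-x t) * sin_sq_add_cos_sq (t + θ)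

lemma snd_eq_parts (θ : ℝ) (x y : ℝ → ℝ) (t : ℝ) :
    y t = radialPart θ x y t * cos (t + θ) - tangentialPart θ x y t * sin (t + θ) := by
  unfold radialPart tangentialPart
  linear_combination (-y t) * sin_sq_add_cos_sq (t + θ)

lemma radialPart_sq_add_tangentialPart_sq (θ : ℝ) (x y : ℝ → ℝ) (t : ℝ) :
    radialPart θ x y t ^ 2 + tangentialPart θ x y t ^ 2 = x t ^ 2 + y t ^ 2 := by
  unfold radialPart tangentialPart
  linear_combination (x t ^ 2 + y t ^ 2) * sin_sq_add_cos_sq (t + θ)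

namespace IsForcedOscillation

variable {ε : ℝ} {g x y : ℝ → ℝ}

lemma continuous_fst (h : IsForcedOscillation ε g x y) : Continuous x :=
  continuous_iff_continuousAt.mpr fun t => (h.hasDerivAt_fst t).continuousAt

lemma continuous_snd (h : IsForcedOscillation ε g x y) : Continuous y :=
  continuous_iff_continuousAt.mpr fun t => (h.hasDerivAt_snd t).continuousAt

lemma hasDerivAt_sq_add_sq (h : IsForcedOscillation ε g x y) (t : ℝ) :
    HasDerivAt (fun t => x t ^ 2 + y t ^ 2)
      (-2 * (x t ^ 2 + y t ^ 2) * (x t ^ 2 + y t ^ 2 - 1) + 2 * ε * g t * y t) t := by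
  refine (((h.hasDerivAt_fst t).pow 2).add ((h.hasDerivAt_snd t).pow 2)).congr_deriv ?_
  push_cast
  ring

lemma sq_add_sq_le (h : IsForcedOscillation ε g x y) (hε : ε ∈ Set.Ioc (0 : ℝ) 1) (t : ℝ) :
    x t ^ 2 + y t ^ 2 ≤ 4 := by
  have hx := h.continuous_fst
  have hy := h.continuous_snd
  have hper : Function.Periodic (fun t => x t ^ 2 + y t ^ 2) (2 * π) := fun t => by
    simp only [h.periodic_fst t, h.periodic_snd t]
  obtain ⟨t₀, -, ht₀⟩ := isCompact_Icc.exists_isMaxOn (s := Set.Icc 0 (2 * π))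
    (f := fun t => x t ^ 2 + y t ^ 2) ⟨0, le_rfl, by positivity⟩ (by fun_prop)
  have hmax (s : ℝ) : x s ^ 2 + y s ^ 2 ≤ x t₀ ^ 2 + y t₀ ^ 2 := by
    obtain ⟨s', hs', he⟩ := hper.exists_mem_Ico₀ (by positivity) s
    rw [he]
    exact ht₀ (Set.Ico_subset_Icc_self hs')
  have hd := IsLocalMax.hasDerivAt_eq_zero (Eventually.of_forall hmax) (h.hasDerivAt_sq_add_sq t₀)
  refine (hmax t).trans ?_
  by_contra! hR
  have hg : |ε * g t₀ * y t₀| ≤ 1 * 2 * |y t₀| := by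
    rw [abs_mul, abs_mul, abs_of_pos hε.1]
    gcongr
    · exact hε.2
    · exact h.abs_forcing_le t₀
  have := (le_abs_self _).trans hg
  nlinarith [sq_nonneg (|y t₀| - 1), sq_abs (y t₀), sq_nonneg (x t₀)]

/-- The radius defect grows slowly. -/
lemma abs_radius_defect_le (h : IsForcedOscillation ε g x y) (hε : ε ∈ Set.Ioc (0 : ℝ) 1)
    {t : ℝ} (ht : t ∈ Set.Icc 0 (2 * π)) :
    |x t ^ 2 + y t ^ 2 - 1| ≤ √((x 0 ^ 2 + y 0 ^ 2 - 1) ^ 2 + 96 * π * ε) := by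
  have hd (s : ℝ) := ((h.hasDerivAt_sq_add_sq s).sub_const 1).pow 2
  have hbound : (x t ^ 2 + y t ^ 2 - 1) ^ 2 - (x 0 ^ 2 + y 0 ^ 2 - 1) ^ 2 ≤ 48 * ε * (t - 0) := by
    refine Convex.image_sub_le_mul_sub_of_deriv_le (D := Set.univ) convex_univ
      (f := fun s => (x s ^ 2 + y s ^ 2 - 1) ^ 2)
      (fun s _ => (hd s).continuousAt.continuousWithinAt)
      (fun s _ => (hd s).differentiableAt.differentiableWithinAt)
      (fun s _ => ?_) 0 (Set.mem_univ _) t (Set.mem_univ _) ht.1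
    have hds := (hd s).deriv
    change deriv (fun s => (x s ^ 2 + y s ^ 2 - 1) ^ 2) s = _ at hds
    rw [hds]
    have hR := h.sq_add_sq_le hε s
    have hy : |y s| ≤ 2 := abs_le_of_sq_le_sq (by nlinarith [sq_nonneg (x s)]) (by norm_num)
    have hS : |x s ^ 2 + y s ^ 2 - 1| ≤ 3 :=
      abs_le.mpr ⟨by nlinarith [sq_nonneg (x s), sq_nonneg (y s)], by linarith⟩
    have hg : |g s * y s * (x s ^ 2 + y s ^ 2 - 1)| ≤ 2 * 2 * 3 := by
      rw [abs_mul, abs_mul]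
      gcongr
      exact h.abs_forcing_le s
    have hg' := mul_le_mul_of_nonneg_left ((le_abs_self _).trans hg) hε.1.le
    have : 0 ≤ (x s ^ 2 + y s ^ 2) * (x s ^ 2 + y s ^ 2 - 1) ^ 2 := by positivity
    push_cast
    nlinarith
  apply abs_le_sqrt
  have : ε * t ≤ ε * (2 * π) := mul_le_mul_of_nonneg_left ht.2 hε.1.le
  linarith

lemma hasDerivAt_radialPart (h : IsForcedOscillation ε g x y) (θ t : ℝ) :
    HasDerivAt (radialPart θ x y)
      (-radialPart θ x y t * (x t ^ 2 + y t ^ 2 - 1) + ε * (g t * cos (t + θ))) t := by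
  have hs := ((hasDerivAt_id t).add_const θ).sin
  have hc := ((hasDerivAt_id t).add_const θ).cos
  refine (((h.hasDerivAt_fst t).mul hs).add ((h.hasDerivAt_snd t).mul hc)).congr_deriv ?_
  simp only [radialPart, id]
  ring

lemma hasDerivAt_tangentialPart (h : IsForcedOscillation ε g x y) (θ t : ℝ) :
    HasDerivAt (tangentialPart θ x y)
      (-tangentialPart θ x y t * (x t ^ 2 + y t ^ 2 - 1) - ε * (g t * sin (t + θ))) t := by
  have hs := ((hasDerivAt_id t).add_const θ).sin
  have hc := ((hasDerivAt_id t).add_const θ).cos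
  refine (((h.hasDerivAt_fst t).mul hc).sub ((h.hasDerivAt_snd t).mul hs)).congr_deriv ?_
  simp only [tangentialPart, id]
  ring

end IsForcedOscillation

/-- Bound for the drift over one period of the parts of a forced oscillation. -/
noncomputable def driftBound (ε x₀ y₀ : ℝ) : ℝ :=
  (2 * √((x₀ ^ 2 + y₀ ^ 2 - 1) ^ 2 + 96 * π * ε) + 2 * ε) * (2 * π)

namespace IsForcedOscillation

variable {ε : ℝ} {g x y : ℝ → ℝ}

lemma drift_le (h : IsForcedOscillation ε g x y) (hε : ε ∈ Set.Ioc (0 : ℝ) 1)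
    {p c d : ℝ → ℝ} (hp : ∀ t, |p t| ≤ 2) (hc : ∀ t, |c t| ≤ 1)
    (hd : ∀ t, HasDerivAt p (d t) t)
    (hdc : ∀ t, d t = -p t * (x t ^ 2 + y t ^ 2 - 1) + ε * (g t * c t))
    {t : ℝ} (ht : t ∈ Set.Icc 0 (2 * π)) :
    |p t - p 0| ≤ driftBound ε (x 0) (y 0) := by
  have hb := Convex.norm_image_sub_le_of_norm_hasDerivWithin_le (f := p) (f' := d)
    (s := Set.Icc 0 (2 * π)) (x := 0) (y := t)
    (C := 2 * √((x 0 ^ 2 + y 0 ^ 2 - 1) ^ 2 + 96 * π * ε) + 2 * ε)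
    (fun s _ => (hd s).hasDerivWithinAt) (fun s hs => ?_) (convex_Icc _ _)
    ⟨le_rfl, by positivity⟩ ht
  · rw [norm_eq_abs, norm_eq_abs, sub_zero, abs_of_nonneg ht.1] at hb
    refine hb.trans (mul_le_mul_of_nonneg_left ht.2 ?_)
    have := hε.1
    positivity
  · rw [hdc, norm_eq_abs]
    refine (abs_add_le _ _).trans (add_le_add ?_ ?_)
    · rw [abs_mul, abs_neg]
      exact mul_le_mul (hp s) (h.abs_radius_defect_le hε hs) (abs_nonneg _) (by norm_num)
    · rw [abs_mul, abs_mul, abs_of_pos hε.1, mul_comm]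
      refine mul_le_mul_of_nonneg_right ?_ hε.1.le
      have := mul_le_mul (h.abs_forcing_le s) (hc s) (abs_nonneg _) (by norm_num)
      linarith

lemma abs_radialPart_le (h : IsForcedOscillation ε g x y) (hε : ε ∈ Set.Ioc (0 : ℝ) 1) (θ t : ℝ) :
    |radialPart θ x y t| ≤ 2 := by
  refine abs_le_of_sq_le_sq ?_ (by norm_num)
  nlinarith [radialPart_sq_add_tangentialPart_sq θ x y t, h.sq_add_sq_le hε t,
    sq_nonneg (tangentialPart θ x y t)]

lemma abs_tangentialPart_le (h : IsForcedOscillation ε g x y) (hε : ε ∈ Set.Ioc (0 : ℝ) 1)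
    (θ t : ℝ) : |tangentialPart θ x y t| ≤ 2 := by
  refine abs_le_of_sq_le_sq ?_ (by norm_num)
  nlinarith [radialPart_sq_add_tangentialPart_sq θ x y t, h.sq_add_sq_le hε t,
    sq_nonneg (radialPart θ x y t)]

lemma radialPart_drift_le (h : IsForcedOscillation ε g x y) (hε : ε ∈ Set.Ioc (0 : ℝ) 1) (θ : ℝ)
    {t : ℝ} (ht : t ∈ Set.Icc 0 (2 * π)) :
    |radialPart θ x y t - radialPart θ x y 0| ≤ driftBound ε (x 0) (y 0) :=
  h.drift_le hε (c := fun t => cos (t + θ)) (h.abs_radialPart_le hε θ)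
    (fun _ => abs_cos_le_one _) (h.hasDerivAt_radialPart θ) (fun _ => rfl) ht

lemma tangentialPart_drift_le (h : IsForcedOscillation ε g x y) (hε : ε ∈ Set.Ioc (0 : ℝ) 1)
    (θ : ℝ) {t : ℝ} (ht : t ∈ Set.Icc 0 (2 * π)) :
    |tangentialPart θ x y t - tangentialPart θ x y 0| ≤ driftBound ε (x 0) (y 0) :=
  h.drift_le hε (c := fun t => -sin (t + θ)) (h.abs_tangentialPart_le hε θ)
    (fun _ => by rw [abs_neg]; exact abs_sin_le_one _)
    (h.hasDerivAt_tangentialPart θ) (fun _ => by ring) ht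

/-- A periodic forced oscillation gains no phase over one period. -/
lemma integral_forcing_mul_fst (h : IsForcedOscillation ε g x y) (hε : 0 < ε) (θ : ℝ)
    (hz : ∀ t ∈ Set.Icc 0 (2 * π), 1 / 2 ≤ radialPart θ x y t) :
    ∫ t in (0 : ℝ)..2 * π, g t * x t / radialPart θ x y t ^ 2 = 0 := by
  have hx := h.continuous_fst
  have hg := h.continuous_forcing
  have hzc : Continuous (radialPart θ x y) :=
    continuous_iff_continuousAt.mpr fun t => (h.hasDerivAt_radialPart θ t).continuousAt
  have huIcc : Set.uIcc 0 (2 * π) = Set.Icc 0 (2 * π) := Set.uIcc_of_le (by positivity)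
  have hne (t : ℝ) (ht : t ∈ Set.uIcc 0 (2 * π)) : radialPart θ x y t ≠ 0 := by
    rw [huIcc] at ht
    linarith [hz t ht]
  have hint := intervalIntegral.integral_eq_sub_of_hasDerivAt (a := 0) (b := 2 * π)
    (f := fun t => tangentialPart θ x y t / radialPart θ x y t)
    (f' := fun t => -ε * (g t * x t / radialPart θ x y t ^ 2)) (fun t ht => ?_) ?_
  · have hper : tangentialPart θ x y (2 * π) = tangentialPart θ x y 0 ∧
        radialPart θ x y (2 * π) = radialPart θ x y 0 := by
      have h₁ := h.periodic_fst 0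
      have h₂ := h.periodic_snd 0
      rw [zero_add] at h₁ h₂
      simp [tangentialPart, radialPart, h₁, h₂, add_comm (2 * π)]
    rw [intervalIntegral.integral_const_mul, hper.1, hper.2, sub_self] at hint
    exact (mul_eq_zero.mp hint).resolve_left (by linarith)
  · have hz0 := hne t ht
    refine ((h.hasDerivAt_tangentialPart θ t).div (h.hasDerivAt_radialPart θ t) hz0).congr_deriv ?_
    rw [← mul_div_assoc]
    congr 1
    linear_combination (ε * g t) * fst_eq_parts θ x y t
  · apply ContinuousOn.intervalIntegrable
    exact continuousOn_const.mul ((hg.mul hx).continuousOn.div (hzc.pow 2).continuousOn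
      fun t ht => pow_ne_zero 2 (hne t ht))

end IsForcedOscillation

end Oscillator

section Averaging

variable {ε : ℕ → ℝ} {g x y : ℕ → ℝ → ℝ} {θ : ℝ}

lemma tendsto_driftBound (hεlim : Tendsto ε atTop (𝓝 0))
    (hx0 : Tendsto (fun m => x m 0) atTop (𝓝 (sin θ)))
    (hy0 : Tendsto (fun m => y m 0) atTop (𝓝 (cos θ))) :
    Tendsto (fun m => driftBound (ε m) (x m 0) (y m 0)) atTop (𝓝 0) := by
  have hS := ((((hx0.pow 2).add (hy0.pow 2)).sub_const 1).pow 2).add (hεlim.const_mul (96 * π))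
  have := ((hS.sqrt.const_mul 2).add (hεlim.const_mul 2)).mul_const (2 * π)
  simpa [driftBound] using this

lemma tendsto_radialPart_zero
    (hx0 : Tendsto (fun m => x m 0) atTop (𝓝 (sin θ)))
    (hy0 : Tendsto (fun m => y m 0) atTop (𝓝 (cos θ))) :
    Tendsto (fun m => radialPart θ (x m) (y m) 0) atTop (𝓝 1) := by
  have := (hx0.mul_const (sin θ)).add (hy0.mul_const (cos θ))
  simpa [radialPart, ← sq] using this

lemma tendsto_tangentialPart_zero
    (hx0 : Tendsto (fun m => x m 0) atTop (𝓝 (sin θ)))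
    (hy0 : Tendsto (fun m => y m 0) atTop (𝓝 (cos θ))) :
    Tendsto (fun m => tangentialPart θ (x m) (y m) 0) atTop (𝓝 0) := by
  have := (hx0.mul_const (cos θ)).sub (hy0.mul_const (sin θ))
  simpa [tangentialPart, mul_comm (cos θ)] using this

lemma tendsto_of_drift {u u₀ b : ℕ → ℝ} {l : ℝ} (hu : ∀ m, |u m - u₀ m| ≤ b m)
    (hb : Tendsto b atTop (𝓝 0)) (hu₀ : Tendsto u₀ atTop (𝓝 l)) : Tendsto u atTop (𝓝 l) := by
  have := (squeeze_zero_norm hu hb).add hu₀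
  simpa using this

lemma tendsto_radialPart
    (h : ∀ m, IsForcedOscillation (ε m) (g m) (x m) (y m))
    (hε : ∀ m, ε m ∈ Set.Ioc (0 : ℝ) 1) (hεlim : Tendsto ε atTop (𝓝 0))
    (hx0 : Tendsto (fun m => x m 0) atTop (𝓝 (sin θ)))
    (hy0 : Tendsto (fun m => y m 0) atTop (𝓝 (cos θ)))
    {t : ℝ} (ht : t ∈ Set.Icc 0 (2 * π)) :
    Tendsto (fun m => radialPart θ (x m) (y m) t) atTop (𝓝 1) :=
  tendsto_of_drift (fun m => (h m).radialPart_drift_le (hε m) θ ht)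
    (tendsto_driftBound hεlim hx0 hy0) (tendsto_radialPart_zero hx0 hy0)

lemma tendsto_tangentialPart
    (h : ∀ m, IsForcedOscillation (ε m) (g m) (x m) (y m))
    (hε : ∀ m, ε m ∈ Set.Ioc (0 : ℝ) 1) (hεlim : Tendsto ε atTop (𝓝 0))
    (hx0 : Tendsto (fun m => x m 0) atTop (𝓝 (sin θ)))
    (hy0 : Tendsto (fun m => y m 0) atTop (𝓝 (cos θ)))
    {t : ℝ} (ht : t ∈ Set.Icc 0 (2 * π)) :
    Tendsto (fun m => tangentialPart θ (x m) (y m) t) atTop (𝓝 0) :=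
  tendsto_of_drift (fun m => (h m).tangentialPart_drift_le (hε m) θ ht)
    (tendsto_driftBound hεlim hx0 hy0) (tendsto_tangentialPart_zero hx0 hy0)

lemma tendsto_fst
    (h : ∀ m, IsForcedOscillation (ε m) (g m) (x m) (y m))
    (hε : ∀ m, ε m ∈ Set.Ioc (0 : ℝ) 1) (hεlim : Tendsto ε atTop (𝓝 0))
    (hx0 : Tendsto (fun m => x m 0) atTop (𝓝 (sin θ)))
    (hy0 : Tendsto (fun m => y m 0) atTop (𝓝 (cos θ)))
    {t : ℝ} (ht : t ∈ Set.Icc 0 (2 * π)) :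
    Tendsto (fun m => x m t) atTop (𝓝 (sin (t + θ))) := by
  have := ((tendsto_radialPart h hε hεlim hx0 hy0 ht).mul_const (sin (t + θ))).add
    ((tendsto_tangentialPart h hε hεlim hx0 hy0 ht).mul_const (cos (t + θ)))
  simpa [← fst_eq_parts] using this

lemma tendsto_snd
    (h : ∀ m, IsForcedOscillation (ε m) (g m) (x m) (y m))
    (hε : ∀ m, ε m ∈ Set.Ioc (0 : ℝ) 1) (hεlim : Tendsto ε atTop (𝓝 0))
    (hx0 : Tendsto (fun m => x m 0) atTop (𝓝 (sin θ)))
    (hy0 : Tendsto (fun m => y m 0) atTop (𝓝 (cos θ)))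
    {t : ℝ} (ht : t ∈ Set.Icc 0 (2 * π)) :
    Tendsto (fun m => y m t) atTop (𝓝 (cos (t + θ))) := by
  have := ((tendsto_radialPart h hε hεlim hx0 hy0 ht).mul_const (cos (t + θ))).sub
    ((tendsto_tangentialPart h hε hεlim hx0 hy0 ht).mul_const (sin (t + θ)))
  simpa [← snd_eq_parts] using this

lemma eventually_half_le_radialPart
    (h : ∀ m, IsForcedOscillation (ε m) (g m) (x m) (y m))
    (hε : ∀ m, ε m ∈ Set.Ioc (0 : ℝ) 1) (hεlim : Tendsto ε atTop (𝓝 0))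
    (hx0 : Tendsto (fun m => x m 0) atTop (𝓝 (sin θ)))
    (hy0 : Tendsto (fun m => y m 0) atTop (𝓝 (cos θ))) :
    ∀ᶠ m in atTop, ∀ t ∈ Set.Icc 0 (2 * π), 1 / 2 ≤ radialPart θ (x m) (y m) t := by
  filter_upwards [(tendsto_driftBound hεlim hx0 hy0).eventually_le_const
      (show (0 : ℝ) < 1 / 4 by norm_num),
    (tendsto_radialPart_zero hx0 hy0).eventually_const_le (show (3 / 4 : ℝ) < 1 by norm_num)]
    with m hb hr t ht
  have := (abs_le.mp ((h m).radialPart_drift_le (hε m) θ ht)).1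
  linarith

/-- The limit forcing is orthogonal to the phase direction of the limit cycle. -/
lemma integral_limit_forcing_mul_sin {G : ℝ → ℝ}
    (h : ∀ m, IsForcedOscillation (ε m) (g m) (x m) (y m))
    (hε : ∀ m, ε m ∈ Set.Ioc (0 : ℝ) 1) (hεlim : Tendsto ε atTop (𝓝 0))
    (hx0 : Tendsto (fun m => x m 0) atTop (𝓝 (sin θ)))
    (hy0 : Tendsto (fun m => y m 0) atTop (𝓝 (cos θ)))
    (hG : ∀ t ∈ Set.Icc 0 (2 * π), Tendsto (fun m => g m t) atTop (𝓝 (G t))) :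
    ∫ t in (0 : ℝ)..2 * π, G t * sin (t + θ) = 0 := by
  have hev := eventually_half_le_radialPart h hε hεlim hx0 hy0
  have hsub : Set.uIoc 0 (2 * π) ⊆ Set.Icc 0 (2 * π) := by
    rw [Set.uIoc_of_le (by positivity)]
    exact Set.Ioc_subset_Icc_self
  have hlim := intervalIntegral.tendsto_integral_filter_of_dominated_convergence
    (μ := MeasureTheory.volume) (a := 0) (b := 2 * π) (l := atTop)
    (F := fun m t => g m t * x m t / radialPart θ (x m) (y m) t ^ 2)
    (f := fun t => G t * sin (t + θ)) (fun _ => 16) ?_ ?_ (by simp) ?_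
  · refine tendsto_nhds_unique hlim (tendsto_const_nhds.congr' ?_)
    filter_upwards [hev] with m hm
    exact ((h m).integral_forcing_mul_fst (hε m).1 θ hm).symm
  · refine Eventually.of_forall fun m => Measurable.aestronglyMeasurable ?_
    have hx := (h m).continuous_fst.measurable
    have hy := (h m).continuous_snd.measurable
    have hg := (h m).continuous_forcing.measurable
    unfold radialPart
    fun_prop
  · filter_upwards [hev] with m hm
    refine Eventually.of_forall fun t ht => ?_
    have hz := hm t (hsub ht)
    have hx : |x m t| ≤ 2 := abs_le_of_sq_le_sq
      (by nlinarith [(h m).sq_add_sq_le (hε m) t, sq_nonneg (y m t)]) (by norm_num)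
    have hgx : |g m t| * |x m t| ≤ 2 * 2 :=
      mul_le_mul ((h m).abs_forcing_le t) hx (abs_nonneg _) (by norm_num)
    rw [norm_eq_abs, abs_div, abs_mul, abs_of_nonneg (sq_nonneg (radialPart _ _ _ _)),
      div_le_iff₀ (by positivity)]
    nlinarith
  · refine Eventually.of_forall fun t ht => ?_
    have := ((hG t (hsub ht)).mul (tendsto_fst h hε hεlim hx0 hy0 (hsub ht))).div
      ((tendsto_radialPart h hε hεlim hx0 hy0 (hsub ht)).pow 2) (by norm_num)
    simpa [Pi.div_def] using this

end Averaging

theorem stmt16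
    (k₁ k₂ : ℝ) (hk₂ : k₂ ≠ 0) (hk₁ : 1 < |k₁|)
    (ε : ℕ → ℝ) (hε : ∀ m, ε m ∈ Set.Ioc (0 : ℝ) 1)
    (hεlim : Filter.Tendsto ε Filter.atTop (nhds 0))
    (φ : ℕ → ℝ → (Fin 4 → ℝ))
    (hφsol : ∀ m : ℕ, ∀ t : ℝ, HasDerivAt (φ m) (sysF k₁ k₂ (ε m) t (φ m t)) t)
    (hφper : ∀ m : ℕ, ∀ t : ℝ, φ m (t + 2 * Real.pi) = φ m t) :
    ∀ θ η : ℝ, ¬ Filter.Tendsto (fun m => φ m 0) Filter.atTop (nhds (xiPt θ η)) := by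
  intro θ η hlim
  have hd (m : ℕ) (t : ℝ) := hasDerivAt_pi.mp (hφsol m t)
  have hcont (m : ℕ) : Continuous (φ m) :=
    continuous_iff_continuousAt.mpr fun t => (hφsol m t).continuousAt
  have hci (m : ℕ) (i : Fin 4) : Continuous (fun t => φ m t i) :=
    (continuous_apply i).comp (hcont m)
  have hper (m : ℕ) (i : Fin 4) : Function.Periodic (fun t => φ m t i) (2 * π) :=
    fun t => congrFun (hφper m t) i
  have hl := tendsto_pi_nhds.mp hlim
  have hsat := continuous_sat
  have hosc₁ (m : ℕ) : IsForcedOscillation (ε m) (fun t => sin t + sat (k₁ * φ m t 2))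
      (fun t => φ m t 0) (fun t => φ m t 1) :=
    { continuous_forcing := continuous_sin.add (hsat.comp (continuous_const.mul (hci m 2)))
      abs_forcing_le := fun t => (abs_add_le _ _).trans
        (by linarith [abs_sin_le_one t, abs_sat_le_one (k₁ * φ m t 2)])
      hasDerivAt_fst := fun t => hd m t 0
      hasDerivAt_snd := fun t => hd m t 1
      periodic_fst := hper m 0
      periodic_snd := hper m 1 }
  have hosc₂ (m : ℕ) : IsForcedOscillation (ε m) (fun t => sat (k₂ * φ m t 1))
      (fun t => φ m t 2) (fun t => φ m t 3) :=
    { continuous_forcing := hsat.comp (continuous_const.mul (hci m 1))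
      abs_forcing_le := fun t => (abs_sat_le_one _).trans one_le_two
      hasDerivAt_fst := fun t => hd m t 2
      hasDerivAt_snd := fun t => hd m t 3
      periodic_fst := hper m 2
      periodic_snd := hper m 3 }
  have hI₂ := integral_limit_forcing_mul_sin (θ := η) (G := fun t => sat (k₂ * cos (t + θ)))
    hosc₂ hε hεlim (hl 2) (hl 3) fun t ht =>
      (hsat.tendsto _).comp ((tendsto_snd hosc₁ hε hεlim (hl 0) (hl 1) ht).const_mul k₂)
  have hI₁ := integral_limit_forcing_mul_sin (θ := θ)
    (G := fun t => sin t + sat (k₁ * sin (t + η)))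
    hosc₁ hε hεlim (hl 0) (hl 1) fun t ht => tendsto_const_nhds.add
      ((hsat.tendsto _).comp ((tendsto_fst hosc₂ hε hεlim (hl 2) (hl 3) ht).const_mul k₁))
  rw [integral_sat_cos_mul_sin] at hI₂
  have hsin : sin (η - θ) = 0 :=
    (mul_eq_zero.mp hI₂).resolve_right (integral_sat_mul_cos_mul_cos_ne_zero hk₂)
  simp only [add_mul] at hI₁
  rw [intervalIntegral.integral_add (by apply Continuous.intervalIntegrable; fun_prop)
    (by apply Continuous.intervalIntegrable; fun_prop), integral_sin_mul_sin_add,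
    integral_sat_sin_mul_sin hsin] at hI₁
  have hD := pi_lt_abs_integral_sat_mul_sin hk₁
  set D := ∫ t in (0 : ℝ)..2 * π, sat (k₁ * sin t) * sin t
  have hcos : |cos (η - θ)| = 1 := by
    rcases sin_eq_zero_iff_cos_eq.mp hsin with hc | hc <;> simp [hc]
  have hle : |D| ≤ π := by
    calc |D| = |cos (η - θ) * D| := by rw [abs_mul, hcos, one_mul]
      _ = |π * cos θ| := by rw [← abs_neg (π * cos θ)]; congr 1; linarith
      _ = π * |cos θ| := by rw [abs_mul, abs_of_pos pi_pos]
      _ ≤ π := mul_le_of_le_one_right pi_pos.le (abs_cos_le_one θ)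
  linarith
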